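/- (Four Vectors Lemma) Let L be a commutative subspace lattice on H and Φ a rank preserving linear map on Alg L. Let N ∈ L with dim N ≥ 2 and dim N₋^⊥ ≥ 2, let x, y be linearly independent vectors in N, let f, g be linearly independent vectors in N₋^⊥, and suppose u, v, p, q, w, z, r, s are nonzero vectors in H with Φ(x⊗f*) = u⊗v*, Φ(y⊗f*) = p⊗q*, Φ(x⊗g*) = w⊗z*, and Φ(y⊗g*) = r⊗s*. Then either (1) u ∼ w, v ∼ q, p ∼ r and z ∼ s, or (2) v ∼ z, u ∼ p, w ∼ r and q ∼ s. -/

import Mathlib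

open scoped InnerProductSpace

noncomputable section

/-- The join (closed linear span) of a family of subspaces of a Hilbert space. -/
def closedJoin {H : Type*} [NormedAddCommGroup H] [InnerProductSpace ℂ H]
    (S : Set (Submodule ℂ H)) : Submodule ℂ H :=
  (sSup S).topologicalClosure

/-- A subspace lattice on `H`: a family of closed subspaces containing `{0}` and `H`,
closed under arbitrary intersections and arbitrary closed linear spans. -/
structure IsSubspaceLattice {H : Type*} [NormedAddCommGroup H] [InnerProductSpace ℂ H]
    (L : Set (Submodule ℂ H)) : Prop where
  isClosed : ∀ E ∈ L, IsClosed (E : Set H)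
  bot_mem : ⊥ ∈ L
  top_mem : ⊤ ∈ L
  sInf_mem : ∀ S : Set (Submodule ℂ H), S ⊆ L → sInf S ∈ L
  join_mem : ∀ S : Set (Submodule ℂ H), S ⊆ L → closedJoin S ∈ L

/-- `M₋`: the join of all members of `L` that do not contain `M`. -/
def minus {H : Type*} [NormedAddCommGroup H] [InnerProductSpace ℂ H]
    (L : Set (Submodule ℂ H)) (M : Submodule ℂ H) : Submodule ℂ H :=
  closedJoin {E | E ∈ L ∧ ¬ M ≤ E}

open Classical in
/-- The orthogonal projection of `H` onto a closed subspace `E`, as an operator on `H`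
(junk value `0` if `E` is not closed). -/
def projOf {H : Type*} [NormedAddCommGroup H] [InnerProductSpace ℂ H] [CompleteSpace H]
    (E : Submodule ℂ H) : H →L[ℂ] H :=
  if h : IsClosed (E : Set H) then
    haveI : CompleteSpace E := h.completeSpace_coe
    E.subtypeL.comp (Submodule.orthogonalProjectionOnto E)
  else 0

/-- A commutative subspace lattice: the orthogonal projections onto members commute. -/
structure IsCSL {H : Type*} [NormedAddCommGroup H] [InnerProductSpace ℂ H] [CompleteSpace H]
    (L : Set (Submodule ℂ H)) extends IsSubspaceLattice L : Prop where
  commutes : ∀ E ∈ L, ∀ F ∈ L, projOf E * projOf F = projOf F * projOf E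

/-- Complete distributivity of the lattice `L` (meets are intersections, joins are
closed linear spans). -/
def IsCompletelyDistributive {H : Type*} [NormedAddCommGroup H] [InnerProductSpace ℂ H]
    (L : Set (Submodule ℂ H)) : Prop :=
  ∀ (I : Type) (J : I → Type) (E : (i : I) → J i → Submodule ℂ H),
    (∀ i j, E i j ∈ L) →
     ((⨅ i, closedJoin (Set.range (E i)))
        = closedJoin (Set.range fun φ : (∀ i, J i) => ⨅ i, E i (φ i)))
    ∧ (closedJoin (Set.range fun i => ⨅ j, E i j)
        = ⨅ φ : (∀ i, J i), closedJoin (Set.range fun i => E i (φ i)))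

/-- `Alg L`: all bounded operators leaving every member of `L` invariant. -/
def algL {H : Type*} [NormedAddCommGroup H] [InnerProductSpace ℂ H]
    (L : Set (Submodule ℂ H)) : Set (H →L[ℂ] H) :=
  {T | ∀ E ∈ L, ∀ x ∈ E, T x ∈ E}

/-- The rank one operator `x ⊗ f* : h ↦ ⟨h, f⟩ x`. -/
def rankOne {H : Type*} [NormedAddCommGroup H] [InnerProductSpace ℂ H]
    (x f : H) : H →L[ℂ] H :=
  (innerSL ℂ f).smulRight x

/-- The rank of a bounded operator: the dimension of its range. -/
def opRank {H : Type*} [NormedAddCommGroup H] [InnerProductSpace ℂ H]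
    (T : H →L[ℂ] H) : Cardinal :=
  Module.rank ℂ (LinearMap.range (T : H →ₗ[ℂ] H))

/-- `Φ` is a linear map of `Alg L` into itself. -/
structure IsLinearOnAlg {H : Type*} [NormedAddCommGroup H] [InnerProductSpace ℂ H]
    (L : Set (Submodule ℂ H)) (Φ : (H →L[ℂ] H) → (H →L[ℂ] H)) : Prop where
  maps : ∀ A ∈ algL L, Φ A ∈ algL L
  map_add : ∀ A ∈ algL L, ∀ B ∈ algL L, Φ (A + B) = Φ A + Φ B
  map_smul : ∀ (c : ℂ), ∀ A ∈ algL L, Φ (c • A) = c • Φ A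

/-- `Φ` preserves the rank of every finite rank operator in `Alg L`. -/
def RankPreserving {H : Type*} [NormedAddCommGroup H] [InnerProductSpace ℂ H]
    (L : Set (Submodule ℂ H)) (Φ : (H →L[ℂ] H) → (H →L[ℂ] H)) : Prop :=
  ∀ A ∈ algL L, opRank A < Cardinal.aleph0 → opRank (Φ A) = opRank A

/-- `a ∼ b`: (nonzero) vectors `a` and `b` are linearly dependent. -/
def Dep {H : Type*} [NormedAddCommGroup H] [InnerProductSpace ℂ H] (a b : H) : Prop :=
  ∃ c : ℂ, c ≠ 0 ∧ b = c • a

/-- `N` is consistent with respect to `Φ`. -/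
def Consistent {H : Type*} [NormedAddCommGroup H] [InnerProductSpace ℂ H]
    (L : Set (Submodule ℂ H)) (Φ : (H →L[ℂ] H) → (H →L[ℂ] H))
    (N : Submodule ℂ H) : Prop :=
  N ≠ ⊥ ∧ minus L N ≠ ⊤ ∧
    ∃ (U : N →ₗ[ℂ] H) (V : ((minus L N)ᗮ : Submodule ℂ H) →ₗ[ℂ] H),
      ∀ (x : N) (f : ((minus L N)ᗮ : Submodule ℂ H)),
        Φ (rankOne (x : H) (f : H)) = rankOne (U x) (V f)

/-- `N` is twisted with respect to `Φ`. -/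
def Twisted {H : Type*} [NormedAddCommGroup H] [InnerProductSpace ℂ H]
    (L : Set (Submodule ℂ H)) (Φ : (H →L[ℂ] H) → (H →L[ℂ] H))
    (N : Submodule ℂ H) : Prop :=
  N ≠ ⊥ ∧ minus L N ≠ ⊤ ∧
    ∃ (U : ((minus L N)ᗮ : Submodule ℂ H) →ₗ⋆[ℂ] H) (V : N →ₗ⋆[ℂ] H),
      ∀ (x : N) (f : ((minus L N)ᗮ : Submodule ℂ H)),
        Φ (rankOne (x : H) (f : H)) = rankOne (U f) (V x)

/-- `N` is isolated: `dim N = 1` and `N^⊥ ∈ L`. -/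
def Isolated {H : Type*} [NormedAddCommGroup H] [InnerProductSpace ℂ H]
    (L : Set (Submodule ℂ H)) (N : Submodule ℂ H) : Prop :=
  Module.rank ℂ N = 1 ∧ Nᗮ ∈ L

/-- The family `F` of all `N ∈ L` with `N ≠ {0}` and `N₋ ≠ H`. -/
def famF {H : Type*} [NormedAddCommGroup H] [InnerProductSpace ℂ H]
    (L : Set (Submodule ℂ H)) : Set (Submodule ℂ H) :=
  {N | N ∈ L ∧ N ≠ ⊥ ∧ minus L N ≠ ⊤}

/-- Subspaces are comparable if one contains the other. -/
def Comparable' {H : Type*} [NormedAddCommGroup H] [InnerProductSpace ℂ H]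
    (M N : Submodule ℂ H) : Prop :=
  M ≤ N ∨ N ≤ M

/-- There is a chain in `F` from `M` to `N`. -/
def ChainConn {H : Type*} [NormedAddCommGroup H] [InnerProductSpace ℂ H]
    (L : Set (Submodule ℂ H)) (M N : Submodule ℂ H) : Prop :=
  ∃ (n : ℕ) (c : Fin (n + 1) → Submodule ℂ H),
    (∀ k, c k ∈ famF L) ∧ c 0 = M ∧ c (Fin.last n) = N ∧
      ∀ k : Fin n, Comparable' (c k.castSucc) (c k.succ)

/-- `𝔊_N`: all members of `F` that can be connected to `N` by a chain. -/
def GSet {H : Type*} [NormedAddCommGroup H] [InnerProductSpace ℂ H]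
    (L : Set (Submodule ℂ H)) (N : Submodule ℂ H) : Set (Submodule ℂ H) :=
  {M | M ∈ famF L ∧ ChainConn L N M}

end

/-!
Write `A`, `B`, `C`, `D` for the images of `x ⊗ f*`, `y ⊗ f*`, `x ⊗ g*`, `y ⊗ g*`. A sum of two
rank one operators `u ⊗ v* + p ⊗ q*` has rank at most one exactly when `u ∼ p` or `v ∼ q`, so `Φ`
preserves the relation "the left factors agree or the right factors agree" in both directions. Hence
consecutive terms of the cycle `A, B, D, C` share a factor, while the opposite terms `A, D` and
`B, C` share none. Regarding a rank one operator as a point of a grid whose coordinates are the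
classes of its two factors, such a cycle is a rectangle, and the two alternatives are its two
possible orientations.
-/

section LinearAlgebra

variable {ι K V W : Type*} [Field K] [AddCommGroup V] [Module K V]
  [AddCommGroup W] [Module K W]

lemma pi_surjective_of_linearIndependent [Finite ι] {φ : ι → Module.Dual K V}
    (hφ : LinearIndependent K φ) : Function.Surjective (LinearMap.pi φ) := by
  have hcoe : LinearIndependent K fun i ↦ (φ i : V → K) :=
    hφ.map' (LinearMap.ltoFun K V K K) (LinearMap.ker_eq_bot.2 DFunLike.coe_injective)
  rw [← LinearMap.range_eq_top, ← Submodule.span_eq (LinearMap.range (LinearMap.pi φ))]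
  exact span_flip_eq_top_iff_linearIndependent.2 hcoe

lemma rank_sum_smulRight [Fintype ι] {φ : ι → Module.Dual K V} {u : ι → W}
    (hφ : LinearIndependent K φ) (hu : LinearIndependent K u) :
    (∑ i, (φ i).smulRight (u i)).rank = Fintype.card ι := by
  have hfactor : ∑ i, (φ i).smulRight (u i) = Fintype.linearCombination K u ∘ₗ LinearMap.pi φ := by
    ext h
    simp [Fintype.linearCombination_apply]
  have hrange := LinearMap.range_eq_top.2 (pi_surjective_of_linearIndependent hφ)
  rw [LinearMap.rank, hfactor, LinearMap.range_comp_of_range_eq_top _ hrange,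
    Fintype.range_linearCombination, rank_span hu]
  simpa using Cardinal.mk_range_eq_of_injective hu.injective

end LinearAlgebra

lemma linearIndependent_innerₛₗ {𝕜 E ι : Type*} [RCLike 𝕜] [NormedAddCommGroup E]
    [InnerProductSpace 𝕜 E] {v : ι → E} (hv : LinearIndependent 𝕜 v) :
    LinearIndependent 𝕜 fun i ↦ innerₛₗ 𝕜 (v i) :=
  hv.map_of_injective_injective (starRingEnd 𝕜) (innerₛₗ 𝕜 : E →ₗ⋆[𝕜] E →ₗ[𝕜] 𝕜).toAddMonoidHom
    (by simp)
    (fun a ha ↦ inner_self_eq_zero.1 (LinearMap.congr_fun ha a))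
    (by simp)

lemma rectangle_of_cycle {α β : Type*} {R : α → α → Prop} {S : β → β → Prop}
    (hR : Equivalence R) (hS : Equivalence S) {a b c d : α} {a' b' c' d' : β}
    (hab : R a b ∨ S a' b') (hcd : R c d ∨ S c' d')
    (hac : R a c ∨ S a' c') (hbd : R b d ∨ S b' d')
    (had : ¬(R a d ∨ S a' d')) (hcb : ¬(R c b ∨ S c' b')) :
    (R a c ∧ S a' b' ∧ R b d ∧ S c' d') ∨ (S a' c' ∧ R a b ∧ R c d ∧ S b' d') := by
  obtain ⟨had, had'⟩ := not_or.1 had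
  obtain ⟨hcb, hcb'⟩ := not_or.1 hcb
  rcases hab with hab | hab'
  · have hac' : S a' c' := hac.resolve_left fun h ↦ hcb (hR.trans (hR.symm h) hab)
    have hbd' : S b' d' := hbd.resolve_left fun h ↦ had (hR.trans hab h)
    have hcd : R c d := hcd.resolve_right fun h ↦ had' (hS.trans hac' h)
    exact Or.inr ⟨hac', hab, hcd, hbd'⟩
  · have hac : R a c := hac.resolve_right fun h ↦ hcb' (hS.trans (hS.symm h) hab')
    have hbd : R b d := hbd.resolve_right fun h ↦ had' (hS.trans hab' h)
    have hcd' : S c' d' := hcd.resolve_left fun h ↦ had (hR.trans hac h)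
    exact Or.inl ⟨hac, hab', hbd, hcd'⟩

section Operators

variable {H : Type*} [NormedAddCommGroup H] [InnerProductSpace ℂ H]

lemma dep_equivalence : Equivalence (Dep (H := H)) where
  refl a := ⟨1, one_ne_zero, (one_smul ℂ a).symm⟩
  symm := by
    rintro a _ ⟨c, hc, rfl⟩
    exact ⟨c⁻¹, inv_ne_zero hc, (inv_smul_smul₀ hc a).symm⟩
  trans := by
    rintro a _ _ ⟨c, hc, rfl⟩ ⟨d, hd, rfl⟩
    exact ⟨d * c, mul_ne_zero hd hc, smul_smul d c a⟩

lemma dep_iff_not_linearIndependent {a b : H} (ha : a ≠ 0) (hb : b ≠ 0) :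
    Dep a b ↔ ¬LinearIndependent ℂ ![a, b] := by
  rw [LinearIndependent.pair_iff' ha]
  push Not
  constructor
  · rintro ⟨c, -, hc⟩
    exact ⟨c, hc.symm⟩
  · rintro ⟨c, rfl⟩
    exact ⟨c, left_ne_zero_of_smul hb, rfl⟩

lemma not_dep_of_linearIndependent {a b : H} (h : LinearIndependent ℂ ![a, b]) : ¬Dep a b :=
  fun hab ↦ (dep_iff_not_linearIndependent (h.ne_zero 0) (h.ne_zero 1)).1 hab h

lemma rankOne_ne_zero_iff {u v : H} : rankOne u v ≠ 0 ↔ u ≠ 0 ∧ v ≠ 0 :=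
  InnerProductSpace.rankOne_eq_zero.not.trans not_or

lemma opRank_eq_zero {T : H →L[ℂ] H} : opRank T = 0 ↔ T = 0 := by
  rw [opRank, Submodule.rank_eq_zero, LinearMap.range_eq_bot]
  exact ContinuousLinearMap.coe_inj (g := 0)

lemma opRank_rankOne_le_one (u v : H) : opRank (rankOne u v) ≤ 1 := by
  rw [opRank, rank_submodule_le_one_iff']
  refine ⟨u, ?_⟩
  rintro _ ⟨h, rfl⟩
  exact Submodule.mem_span_singleton.2 ⟨inner ℂ v h, rfl⟩

lemma opRank_rankOne_lt_aleph0 (u v : H) : opRank (rankOne u v) < Cardinal.aleph0 :=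
  (opRank_rankOne_le_one u v).trans_lt Cardinal.one_lt_aleph0

lemma opRank_add_lt_aleph0 {S T : H →L[ℂ] H} (hS : opRank S < Cardinal.aleph0)
    (hT : opRank T < Cardinal.aleph0) : opRank (S + T) < Cardinal.aleph0 :=
  (LinearMap.rank_add_le (S : H →ₗ[ℂ] H) T).trans_lt (Cardinal.add_lt_aleph0 hS hT)

lemma opRank_rankOne_add_rankOne_of_linearIndependent {u v p q : H}
    (hup : LinearIndependent ℂ ![u, p]) (hvq : LinearIndependent ℂ ![v, q]) :
    opRank (rankOne u v + rankOne p q) = 2 := by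
  have hrank := rank_sum_smulRight (linearIndependent_innerₛₗ hvq) hup
  rw [Fin.sum_univ_two] at hrank
  exact hrank.trans (by simp)

lemma opRank_rankOne_add_rankOne_le_one_of_dep {u v p q : H} (h : Dep u p ∨ Dep v q) :
    opRank (rankOne u v + rankOne p q) ≤ 1 := by
  rcases h with ⟨c, -, rfl⟩ | ⟨c, -, rfl⟩
  · have hsum : rankOne u v + rankOne (c • u) q = rankOne u (v + star c • q) := by
      ext k
      simp [rankOne, add_smul, smul_smul, mul_comm]
    exact hsum ▸ opRank_rankOne_le_one _ _
  · have hsum : rankOne u v + rankOne p (c • v) = rankOne (u + star c • p) v := by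
      ext k
      simp [rankOne, smul_smul, mul_comm]
    exact hsum ▸ opRank_rankOne_le_one _ _

lemma opRank_rankOne_add_rankOne_le_one_iff {u v p q : H}
    (huv : rankOne u v ≠ 0) (hpq : rankOne p q ≠ 0) :
    opRank (rankOne u v + rankOne p q) ≤ 1 ↔ Dep u p ∨ Dep v q := by
  obtain ⟨hu, hv⟩ := rankOne_ne_zero_iff.1 huv
  obtain ⟨hp, hq⟩ := rankOne_ne_zero_iff.1 hpq
  refine ⟨fun hle ↦ ?_, opRank_rankOne_add_rankOne_le_one_of_dep⟩
  rw [dep_iff_not_linearIndependent hu hp, dep_iff_not_linearIndependent hv hq, ← not_and_or]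
  rintro ⟨hup, hvq⟩
  rw [opRank_rankOne_add_rankOne_of_linearIndependent hup hvq] at hle
  exact hle.not_gt Cardinal.one_lt_two

variable {L : Set (Submodule ℂ H)} {Φ : (H →L[ℂ] H) → (H →L[ℂ] H)}

lemma add_mem_algL {A B : H →L[ℂ] H} (hA : A ∈ algL L) (hB : B ∈ algL L) : A + B ∈ algL L :=
  fun E hE h hh ↦ E.add_mem (hA E hE h hh) (hB E hE h hh)

lemma le_minus {E N : Submodule ℂ H} (hE : E ∈ L) (hNE : ¬N ≤ E) : E ≤ minus L N :=
  (le_sSup (show E ∈ {E | E ∈ L ∧ ¬N ≤ E} from ⟨hE, hNE⟩)).trans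
    (Submodule.le_topologicalClosure _)

lemma rankOne_mem_algL {N : Submodule ℂ H} {x f : H} (hx : x ∈ N) (hf : f ∈ (minus L N)ᗮ) :
    rankOne x f ∈ algL L := by
  intro E hE h hh
  change inner ℂ f h • x ∈ E
  by_cases hNE : N ≤ E
  · exact E.smul_mem _ (hNE hx)
  · rw [Submodule.inner_left_of_mem_orthogonal (le_minus hE hNE hh) hf, zero_smul]
    exact E.zero_mem

lemma RankPreserving.map_ne_zero (hrank : RankPreserving L Φ) {A : H →L[ℂ] H} (hA : A ∈ algL L)
    (hfin : opRank A < Cardinal.aleph0) (hne : A ≠ 0) : Φ A ≠ 0 := by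
  rwa [Ne, ← opRank_eq_zero, hrank A hA hfin, opRank_eq_zero]

lemma RankPreserving.dep_or_dep_iff (hrank : RankPreserving L Φ)
    (hadd : ∀ A ∈ algL L, ∀ B ∈ algL L, Φ (A + B) = Φ A + Φ B) {x y f g u v p q : H}
    (hxf : rankOne x f ∈ algL L) (hyg : rankOne y g ∈ algL L)
    (hxf₀ : rankOne x f ≠ 0) (hyg₀ : rankOne y g ≠ 0)
    (huv : Φ (rankOne x f) = rankOne u v) (hpq : Φ (rankOne y g) = rankOne p q) :
    Dep u p ∨ Dep v q ↔ Dep x y ∨ Dep f g := by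
  have hxf_fin := opRank_rankOne_lt_aleph0 x f
  have hyg_fin := opRank_rankOne_lt_aleph0 y g
  have huv₀ : rankOne u v ≠ 0 := huv ▸ hrank.map_ne_zero hxf hxf_fin hxf₀
  have hpq₀ : rankOne p q ≠ 0 := hpq ▸ hrank.map_ne_zero hyg hyg_fin hyg₀
  have hrank_add : opRank (rankOne u v + rankOne p q) = opRank (rankOne x f + rankOne y g) := by
    rw [← huv, ← hpq, ← hadd _ hxf _ hyg]
    exact hrank _ (add_mem_algL hxf hyg) (opRank_add_lt_aleph0 hxf_fin hyg_fin)
  rw [← opRank_rankOne_add_rankOne_le_one_iff huv₀ hpq₀, hrank_add,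
    opRank_rankOne_add_rankOne_le_one_iff hxf₀ hyg₀]

theorem stmt_2_general (hadd : ∀ A ∈ algL L, ∀ B ∈ algL L, Φ (A + B) = Φ A + Φ B)
    (hrank : RankPreserving L Φ) {N : Submodule ℂ H} {x y f g u v p q w z r s : H}
    (hx : x ∈ N) (hy : y ∈ N) (hxy : LinearIndependent ℂ ![x, y])
    (hf : f ∈ (minus L N)ᗮ) (hg : g ∈ (minus L N)ᗮ) (hfg : LinearIndependent ℂ ![f, g])
    (hA : Φ (rankOne x f) = rankOne u v) (hB : Φ (rankOne y f) = rankOne p q)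
    (hC : Φ (rankOne x g) = rankOne w z) (hD : Φ (rankOne y g) = rankOne r s) :
    (Dep u w ∧ Dep v q ∧ Dep p r ∧ Dep z s) ∨
    (Dep v z ∧ Dep u p ∧ Dep w r ∧ Dep q s) := by
  have hxf₀ : rankOne x f ≠ 0 := rankOne_ne_zero_iff.2 ⟨hxy.ne_zero 0, hfg.ne_zero 0⟩
  have hyf₀ : rankOne y f ≠ 0 := rankOne_ne_zero_iff.2 ⟨hxy.ne_zero 1, hfg.ne_zero 0⟩
  have hxg₀ : rankOne x g ≠ 0 := rankOne_ne_zero_iff.2 ⟨hxy.ne_zero 0, hfg.ne_zero 1⟩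
  have hyg₀ : rankOne y g ≠ 0 := rankOne_ne_zero_iff.2 ⟨hxy.ne_zero 1, hfg.ne_zero 1⟩
  have hxf := rankOne_mem_algL hx hf
  have hyf := rankOne_mem_algL hy hf
  have hxg := rankOne_mem_algL hx hg
  have hyg := rankOne_mem_algL hy hg
  have not_dep_xy : ¬Dep x y := not_dep_of_linearIndependent hxy
  have not_dep_fg : ¬Dep f g := not_dep_of_linearIndependent hfg
  have not_dep_gf : ¬Dep g f := fun h ↦ not_dep_fg (dep_equivalence.symm h)
  apply rectangle_of_cycle dep_equivalence dep_equivalence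
  · exact (hrank.dep_or_dep_iff hadd hxf hyf hxf₀ hyf₀ hA hB).2 (.inr (dep_equivalence.refl f))
  · exact (hrank.dep_or_dep_iff hadd hxg hyg hxg₀ hyg₀ hC hD).2 (.inr (dep_equivalence.refl g))
  · exact (hrank.dep_or_dep_iff hadd hxf hxg hxf₀ hxg₀ hA hC).2 (.inl (dep_equivalence.refl x))
  · exact (hrank.dep_or_dep_iff hadd hyf hyg hyf₀ hyg₀ hB hD).2 (.inl (dep_equivalence.refl y))
  · exact mt (hrank.dep_or_dep_iff hadd hxf hyg hxf₀ hyg₀ hA hD).1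
      (not_or.2 ⟨not_dep_xy, not_dep_fg⟩)
  · exact mt (hrank.dep_or_dep_iff hadd hxg hyf hxg₀ hyf₀ hC hB).1
      (not_or.2 ⟨not_dep_xy, not_dep_gf⟩)

end Operators

/-- (Four Vectors Lemma) -/
theorem stmt_2 {H : Type*} [NormedAddCommGroup H] [InnerProductSpace ℂ H]
    [CompleteSpace H] [TopologicalSpace.SeparableSpace H]
    (L : Set (Submodule ℂ H)) (hL : IsCSL L)
    (Φ : (H →L[ℂ] H) → (H →L[ℂ] H)) (hlin : IsLinearOnAlg L Φ)
    (hrank : RankPreserving L Φ)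
    (N : Submodule ℂ H) (hN : N ∈ L)
    (hdimN : 2 ≤ Module.rank ℂ N)
    (hdimN' : 2 ≤ Module.rank ℂ (((minus L N)ᗮ : Submodule ℂ H) : Type _))
    (x y f g u v p q w z r s : H)
    (hx : x ∈ N) (hy : y ∈ N) (hxy : LinearIndependent ℂ ![x, y])
    (hf : f ∈ (minus L N)ᗮ) (hg : g ∈ (minus L N)ᗮ) (hfg : LinearIndependent ℂ ![f, g])
    (hu : u ≠ 0) (hv : v ≠ 0) (hp : p ≠ 0) (hq : q ≠ 0)
    (hw : w ≠ 0) (hz : z ≠ 0) (hr : r ≠ 0) (hs : s ≠ 0)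
    (hA : Φ (rankOne x f) = rankOne u v)
    (hB : Φ (rankOne y f) = rankOne p q)
    (hC : Φ (rankOne x g) = rankOne w z)
    (hD : Φ (rankOne y g) = rankOne r s) :
    (Dep u w ∧ Dep v q ∧ Dep p r ∧ Dep z s) ∨
    (Dep v z ∧ Dep u p ∧ Dep w r ∧ Dep q s) :=
  stmt_2_general hlin.map_add hrank hx hy hxy hf hg hfg hA hB hC hD
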